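/- Let g(x) = arctan(x) − (π/2)·sgn(x). Then for each real s ≠ 0 the improper integral ĝ(s) = lim_{X→−∞, Y→∞} ∫_X^Y e^{-ist} g(t) dt exists and equals iπ(1 − e^{−|s|})/s. -/

import Mathlib

open MeasureTheory Filter Topology FourierTransform

/-- The function `e^{iwt} e^{-|t|}` is integrable, with integral `2 / (1 + w²)`. -/
lemma integrable_and_integral_cexp_mul_exp_neg_abs (w : ℝ) :
    Integrable (fun t : ℝ => Complex.exp (Complex.I * w * t) * (Real.exp (-|t|) : ℂ)) ∧
      ∫ t : ℝ, Complex.exp (Complex.I * w * t) * (Real.exp (-|t|) : ℂ) =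
        2 * ((1 + w ^ 2 : ℝ) : ℂ)⁻¹ := by
  have hneg : Set.EqOn (fun t : ℝ => Complex.exp (Complex.I * w * t) * (Real.exp (-|t|) : ℂ))
      (fun t : ℝ => Complex.exp ((1 + Complex.I * w) * t)) (Set.Iic 0) := fun t ht => by
    simp only [abs_of_nonpos (Set.mem_Iic.mp ht), neg_neg, Complex.ofReal_exp, ← Complex.exp_add]
    ring_nf
  have hpos : Set.EqOn (fun t : ℝ => Complex.exp (Complex.I * w * t) * (Real.exp (-|t|) : ℂ))
      (fun t : ℝ => Complex.exp ((-1 + Complex.I * w) * t)) (Set.Ioi 0) := fun t ht => by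
    simp only [abs_of_pos (Set.mem_Ioi.mp ht), Complex.ofReal_neg, Complex.ofReal_exp,
      ← Complex.exp_add]
    ring_nf
  have hneg_int := (integrableOn_congr_fun hneg measurableSet_Iic).mpr
    (integrableOn_exp_mul_complex_Iic (a := 1 + Complex.I * w) (by simp) 0)
  have hpos_int := (integrableOn_congr_fun hpos measurableSet_Ioi).mpr
    (integrableOn_exp_mul_complex_Ioi (a := -1 + Complex.I * w) (by simp) 0)
  refine ⟨?_, ?_⟩
  · rw [← integrableOn_univ, ← Set.Iic_union_Ioi (a := (0 : ℝ))]
    exact hneg_int.union hpos_int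
  rw [← intervalIntegral.integral_Iic_add_Ioi hneg_int hpos_int,
    setIntegral_congr_fun measurableSet_Iic hneg, setIntegral_congr_fun measurableSet_Ioi hpos,
    integral_exp_mul_complex_Iic (by simp), integral_exp_mul_complex_Ioi (by simp)]
  have h₁ : (1 + Complex.I * w) ≠ 0 := fun h => by simpa using congrArg Complex.re h
  have h₂ : (-1 + Complex.I * w) ≠ 0 := fun h => by simpa using congrArg Complex.re h
  have h₃ : ((1 + w ^ 2 : ℝ) : ℂ) = -((1 + Complex.I * w) * (-1 + Complex.I * w)) := by
    push_cast
    linear_combination (w : ℂ) ^ 2 * Complex.I_sq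
  rw [h₃]
  simp only [Complex.ofReal_zero, mul_zero, Complex.exp_zero]
  field_simp
  ring

lemma norm_cexp_neg_I_mul (s t : ℝ) : ‖Complex.exp (-(Complex.I * s * t))‖ = 1 := by
  simp [Complex.norm_exp]

lemma integrable_cexp_mul_inv_one_add_sq (s : ℝ) :
    Integrable (fun t : ℝ => Complex.exp (-(Complex.I * s * t)) * ((1 + t ^ 2 : ℝ) : ℂ)⁻¹) := by
  refine (integrable_inv_one_add_sq.ofReal (𝕜 := ℂ)).bdd_mul (c := 1)
    (Continuous.aestronglyMeasurable (by fun_prop))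
    (.of_forall fun t => (norm_cexp_neg_I_mul s t).le) |>.congr (.of_forall fun t => ?_)
  simp

/-- The Fourier transform of `(1 + t²)⁻¹`. -/
lemma integral_cexp_mul_inv_one_add_sq (s : ℝ) :
    ∫ t : ℝ, Complex.exp (-(Complex.I * s * t)) * ((1 + t ^ 2 : ℝ) : ℂ)⁻¹ =
      Real.pi * (Real.exp (-|s|) : ℂ) := by
  let f : ℝ → ℂ := fun t => (Real.exp (-|t|) : ℂ)
  have hf : Integrable f := by
    simpa [f] using (integrable_and_integral_cexp_mul_exp_neg_abs 0).1
  have hfourier : 𝓕 f = fun w : ℝ => 2 * ((1 + (2 * Real.pi * w) ^ 2 : ℝ) : ℂ)⁻¹ := by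
    ext w
    have h := (integrable_and_integral_cexp_mul_exp_neg_abs (-(2 * Real.pi * w))).2
    rw [neg_sq] at h
    rw [Real.fourier_real_eq_integral_exp_smul, ← h]
    congr 1 with t
    simp only [f, smul_eq_mul]
    push_cast
    ring_nf
  have hfourier_int : Integrable (𝓕 f) := by
    rw [hfourier]
    have h := ((integrable_inv_one_add_sq.comp_mul_left'
      Real.two_pi_pos.ne').ofReal (𝕜 := ℂ)).const_mul 2
    simpa using h
  have hinv := congrFun (Continuous.fourierInv_fourier_eq (f := f) (by fun_prop) hf hfourier_int)
    (-s)
  have hscale := Measure.integral_comp_mul_left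
    (fun t : ℝ => Complex.exp (-(Complex.I * s * t)) * ((1 + t ^ 2 : ℝ) : ℂ)⁻¹) (2 * Real.pi)
  have hinv' : 2 * ∫ w : ℝ, Complex.exp (-(Complex.I * s * (2 * Real.pi * w : ℝ))) *
      ((1 + (2 * Real.pi * w) ^ 2 : ℝ) : ℂ)⁻¹ = (Real.exp (-|s|) : ℂ) := by
    rw [hfourier, Real.fourierInv_eq'] at hinv
    simp only [f, abs_neg] at hinv
    rw [← hinv, ← integral_const_mul]
    congr 1 with w
    have hexp : -(Complex.I * s * (2 * Real.pi * w : ℝ)) =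
        ((2 * Real.pi * inner ℝ w (-s) : ℝ) : ℂ) * Complex.I := by
      simp; ring
    rw [hexp, smul_eq_mul]
    ring
  rw [hscale, abs_of_pos (by positivity), Complex.real_smul] at hinv'
  rw [← hinv']
  have hpi : (Real.pi : ℂ) ≠ 0 := by exact_mod_cast Real.pi_ne_zero
  push_cast
  field_simp

/-- Integration by parts against a translate of `arctan`. -/
lemma intervalIntegral_cexp_mul_arctan_sub {s : ℝ} (hs : s ≠ 0) (c a b : ℝ) :
    ∫ t in a..b, Complex.exp (-(Complex.I * s * t)) * ((Real.arctan t - c : ℝ) : ℂ) =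
      Complex.I / s * (Complex.exp (-(Complex.I * s * b)) * ((Real.arctan b - c : ℝ) : ℂ) -
        Complex.exp (-(Complex.I * s * a)) * ((Real.arctan a - c : ℝ) : ℂ) -
        ∫ t in a..b, Complex.exp (-(Complex.I * s * t)) * ((1 + t ^ 2 : ℝ) : ℂ)⁻¹) := by
  have hs' : (s : ℂ) ≠ 0 := by exact_mod_cast hs
  have hu (t : ℝ) : HasDerivAt (fun t : ℝ => ((Real.arctan t - c : ℝ) : ℂ))
      (((1 + t ^ 2)⁻¹ : ℝ) : ℂ) t :=
    ((Real.hasDerivAt_arctan' t).sub_const c).ofReal_comp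
  have hv (t : ℝ) : HasDerivAt (fun t : ℝ => Complex.I / s * Complex.exp (-(Complex.I * s * t)))
      (Complex.exp (-(Complex.I * s * t))) t := by
    have h := ((((hasDerivAt_id t).ofReal_comp.const_mul (Complex.I * (s : ℂ))).neg).cexp).const_mul
      (Complex.I / s)
    refine h.congr_deriv ?_
    simp only [id, Complex.ofReal_one]
    field_simp
    linear_combination -Complex.exp (-(Complex.I * s * t)) * Complex.I_sq
  have hu' : Continuous fun t : ℝ => (((1 + t ^ 2)⁻¹ : ℝ) : ℂ) :=
    Complex.continuous_ofReal.comp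
      (Continuous.inv₀ (by fun_prop) fun t => by positivity)
  have hv' : Continuous fun t : ℝ => Complex.exp (-(Complex.I * s * t)) := by fun_prop
  have h := intervalIntegral.integral_mul_deriv_eq_deriv_mul (a := a) (b := b)
    (fun t _ => hu t) (fun t _ => hv t)
    (hu'.intervalIntegrable a b) (hv'.intervalIntegrable a b)
  have hparts : ∫ t in a..b, (((1 + t ^ 2)⁻¹ : ℝ) : ℂ) *
      (Complex.I / s * Complex.exp (-(Complex.I * s * t))) =
      Complex.I / s *
        ∫ t in a..b, Complex.exp (-(Complex.I * s * t)) * ((1 + t ^ 2 : ℝ) : ℂ)⁻¹ := by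
    rw [← intervalIntegral.integral_const_mul]
    congr 1 with t
    push_cast
    ring
  simp_rw [mul_comm (Complex.exp _) (((Real.arctan _ - c : ℝ) : ℂ))]
  rw [h, hparts]
  ring

lemma intervalIntegral_cexp_mul_arctan_sub_sign {s : ℝ} (hs : s ≠ 0) {a b : ℝ} (ha : a ≤ 0)
    (hb : 0 ≤ b) :
    ∫ t in a..b, Complex.exp (-(Complex.I * s * t)) *
        ((Real.arctan t - Real.pi / 2 * Real.sign t : ℝ) : ℂ) =
      Complex.I / s * (
        Complex.exp (-(Complex.I * s * b)) * ((Real.arctan b - Real.pi / 2 : ℝ) : ℂ) -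
        Complex.exp (-(Complex.I * s * a)) * ((Real.arctan a - -(Real.pi / 2) : ℝ) : ℂ) +
        Real.pi -
        ∫ t in a..b, Complex.exp (-(Complex.I * s * t)) * ((1 + t ^ 2 : ℝ) : ℂ)⁻¹) := by
  have hneg : Set.EqOn
      (fun t : ℝ => Complex.exp (-(Complex.I * s * t)) *
        ((Real.arctan t - -(Real.pi / 2) : ℝ) : ℂ))
      (fun t : ℝ => Complex.exp (-(Complex.I * s * t)) *
        ((Real.arctan t - Real.pi / 2 * Real.sign t : ℝ) : ℂ)) (Set.uIoo a 0) := fun t ht => by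
    rw [Set.uIoo_of_le ha] at ht
    simp [Real.sign_of_neg ht.2]
  have hpos : Set.EqOn
      (fun t : ℝ => Complex.exp (-(Complex.I * s * t)) *
        ((Real.arctan t - Real.pi / 2 : ℝ) : ℂ))
      (fun t : ℝ => Complex.exp (-(Complex.I * s * t)) *
        ((Real.arctan t - Real.pi / 2 * Real.sign t : ℝ) : ℂ)) (Set.uIoo 0 b) := fun t ht => by
    rw [Set.uIoo_of_le hb] at ht
    simp [Real.sign_of_pos ht.1]
  have hint (c x y : ℝ) : IntervalIntegrable (fun t : ℝ => Complex.exp (-(Complex.I * s * t)) *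
      ((Real.arctan t - c : ℝ) : ℂ)) volume x y :=
    Continuous.intervalIntegrable (by fun_prop) x y
  have hint' := integrable_cexp_mul_inv_one_add_sq s
  rw [← intervalIntegral.integral_add_adjacent_intervals
      ((hint _ a 0).congr_uIoo hneg) ((hint _ 0 b).congr_uIoo hpos),
    ← intervalIntegral.integral_congr_uIoo hneg, ← intervalIntegral.integral_congr_uIoo hpos,
    intervalIntegral_cexp_mul_arctan_sub hs, intervalIntegral_cexp_mul_arctan_sub hs,
    ← intervalIntegral.integral_add_adjacent_intervals
      (hint'.intervalIntegrable (a := a) (b := 0)) (hint'.intervalIntegrable (a := 0) (b := b))]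
  simp only [Complex.ofReal_zero, mul_zero, neg_zero, Complex.exp_zero, Real.arctan_zero]
  push_cast
  ring

/-- The improper Fourier transform of `g(x) = arctan(x) - (π/2) sgn(x)` exists for `s ≠ 0`
and equals `iπ(1 - e^{-|s|})/s`. -/
theorem fourier_transform_arctan_minus_sgn (s : ℝ) (hs : s ≠ 0) :
    Filter.Tendsto
      (fun P : ℝ × ℝ =>
        ∫ t in P.1..P.2, Complex.exp (-(Complex.I * s * t)) *
          ((Real.arctan t - Real.pi / 2 * Real.sign t : ℝ) : ℂ))
      (Filter.atBot ×ˢ Filter.atTop)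
      (nhds (Complex.I * (Real.pi : ℂ) * (1 - ((Real.exp (-|s|) : ℝ) : ℂ)) / (s : ℂ))) := by
  have hboundary {l : Filter ℝ} {c : ℝ} (h : Tendsto Real.arctan l (𝓝 c)) :
      Tendsto (fun t : ℝ => Complex.exp (-(Complex.I * s * t)) *
        ((Real.arctan t - c : ℝ) : ℂ)) l (𝓝 0) := by
    rw [tendsto_zero_iff_norm_tendsto_zero]
    simpa only [norm_mul, norm_cexp_neg_I_mul, one_mul, Complex.norm_real, sub_self, norm_zero]
      using (h.sub_const c).norm
  have hbot := (hboundary (tendsto_nhds_of_tendsto_nhdsWithin Real.tendsto_arctan_atBot)).comp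
    (tendsto_fst (f := atBot) (g := (atTop : Filter ℝ)))
  have htop := (hboundary (tendsto_nhds_of_tendsto_nhdsWithin Real.tendsto_arctan_atTop)).comp
    (tendsto_snd (f := (atBot : Filter ℝ)) (g := atTop))
  have hmain := intervalIntegral_tendsto_integral (integrable_cexp_mul_inv_one_add_sq s)
    (tendsto_fst (f := atBot) (g := (atTop : Filter ℝ)))
    (tendsto_snd (f := (atBot : Filter ℝ)) (g := atTop))
  rw [integral_cexp_mul_inv_one_add_sq] at hmain
  have hlim := (((htop.sub hbot).add_const (Real.pi : ℂ)).sub hmain).const_mul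
    (Complex.I / (s : ℂ))
  have hvalue : Complex.I / (s : ℂ) * (0 - 0 + Real.pi - Real.pi * (Real.exp (-|s|) : ℂ)) =
      Complex.I * (Real.pi : ℂ) * (1 - ((Real.exp (-|s|) : ℝ) : ℂ)) / (s : ℂ) := by
    ring
  rw [hvalue] at hlim
  refine hlim.congr' ?_
  filter_upwards [prod_mem_prod (Iic_mem_atBot 0) (Ici_mem_atTop 0)] with P hP
  exact (intervalIntegral_cexp_mul_arctan_sub_sign hs hP.1 hP.2).symm
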